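/- arXiv:1611.07285 — 5 statements merged into one kernel-verified Lean document; each statement's English description precedes it below -/
import Mathlib

section
/- Fix a real inner product space E, a weight vector w ∈ E, a learning rate η > 0 and a regularization parameter λ ≥ 0 with a := 1 − ηλ > 0. Let (pᵢ, qᵢ) be a family of labeled examples indexed by a finite nonempty set, with ‖pᵢ‖ = 1 and qᵢ ∈ {−1, 1}, and let w⁽ⁱ⁾ := a·w + η·qᵢ·pᵢ be the SGD update of w on (pᵢ, qᵢ). Then for all indices i, j the following are equivalent: (1) ⟪w⁽ⁱ⁾, w⟫ ≤ ⟪w⁽ʲ⁾, w⟫; (2) qᵢ·⟪w, pᵢ⟫ ≤ qⱼ·⟪w, pⱼ⟫; (3) qᵢ·⟪w⁽ⁱ⁾, pᵢ⟫ ≤ qⱼ·⟪w⁽ʲ⁾, pⱼ⟫. In particular, an index i minimizes ⟪w⁽ⁱ⁾, w⟫ over the index set if and only if it minimizes qᵢ·⟪w, pᵢ⟫, if and only if it minimizes qᵢ·⟪w⁽ⁱ⁾, pᵢ⟫. -/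
open scoped InnerProductSpace

/-- For SGD updates `w⁽ⁱ⁾ = a•w + η·qᵢ•pᵢ` on unit-norm labeled examples,
the three orderings ⟪w⁽ⁱ⁾,w⟫, current margin qᵢ⟪w,pᵢ⟫, and future margin qᵢ⟪w⁽ⁱ⁾,pᵢ⟫
are pairwise equivalent, hence they have the same minimizers. -/
theorem sgd_inner_margin_equiv
    {E : Type*} [NormedAddCommGroup E] [InnerProductSpace ℝ E]
    {ι : Type*} [Fintype ι] [Nonempty ι]
    (w : E) (η lam : ℝ) (hη : 0 < η) (hlam : 0 ≤ lam)
    (a : ℝ) (ha : a = 1 - η * lam) (ha0 : 0 < a)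
    (p : ι → E) (q : ι → ℝ)
    (hp : ∀ i, ‖p i‖ = 1) (hq : ∀ i, q i = 1 ∨ q i = -1)
    (w' : ι → E) (hw' : ∀ i, w' i = a • w + (η * q i) • p i) :
    (∀ i j : ι,
      (⟪w' i, w⟫_ℝ ≤ ⟪w' j, w⟫_ℝ ↔ q i * ⟪w, p i⟫_ℝ ≤ q j * ⟪w, p j⟫_ℝ) ∧
      (q i * ⟪w, p i⟫_ℝ ≤ q j * ⟪w, p j⟫_ℝ ↔
        q i * ⟪w' i, p i⟫_ℝ ≤ q j * ⟪w' j, p j⟫_ℝ)) ∧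
    (∀ i : ι,
      ((∀ j, ⟪w' i, w⟫_ℝ ≤ ⟪w' j, w⟫_ℝ) ↔
        (∀ j, q i * ⟪w, p i⟫_ℝ ≤ q j * ⟪w, p j⟫_ℝ)) ∧
      ((∀ j, q i * ⟪w, p i⟫_ℝ ≤ q j * ⟪w, p j⟫_ℝ) ↔
        (∀ j, q i * ⟪w' i, p i⟫_ℝ ≤ q j * ⟪w' j, p j⟫_ℝ))) := by
  have h1 : ∀ i, ⟪w' i, w⟫_ℝ = a * ⟪w, w⟫_ℝ + η * (q i * ⟪w, p i⟫_ℝ) := by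
    intro i
    rw [hw' i, inner_add_left, real_inner_smul_left, real_inner_smul_left,
      real_inner_comm w (p i)]
    ring
  have h2 : ∀ i, q i * ⟪w' i, p i⟫_ℝ = a * (q i * ⟪w, p i⟫_ℝ) + η := by
    intro i
    have hpp : ⟪p i, p i⟫_ℝ = 1 := by
      rw [real_inner_self_eq_norm_sq, hp i]; norm_num
    rw [hw' i, inner_add_left, real_inner_smul_left, real_inner_smul_left, hpp]
    rcases hq i with h | h <;> rw [h] <;> ring
  have key : ∀ i j : ι,
      (⟪w' i, w⟫_ℝ ≤ ⟪w' j, w⟫_ℝ ↔ q i * ⟪w, p i⟫_ℝ ≤ q j * ⟪w, p j⟫_ℝ) ∧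
      (q i * ⟪w, p i⟫_ℝ ≤ q j * ⟪w, p j⟫_ℝ ↔
        q i * ⟪w' i, p i⟫_ℝ ≤ q j * ⟪w' j, p j⟫_ℝ) := by
    intro i j
    rw [h1 i, h1 j, h2 i, h2 j, add_le_add_iff_left, add_le_add_iff_right,
      mul_le_mul_iff_right₀ hη, mul_le_mul_iff_right₀ ha0]
    exact ⟨Iff.rfl, Iff.rfl⟩
  exact ⟨key, fun i => ⟨forall_congr' fun j => (key i j).1, forall_congr' fun j => (key i j).2⟩⟩
end

section
/- Let a, η, s be real numbers with a > 0, η > 0 and a²·s > η². Then the function f(m) := (a·m + η) / √(a²·s + 2·a·η·m + η²) is strictly monotone increasing on the closed interval [−√s, √s]; moreover the quantity under the square root is strictly positive for every m in this interval. -/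
/-- For `a > 0`, `η > 0` and `a²s > η²`, the normalized-future-margin map
`f(m) = (a·m + η)/√(a²s + 2aηm + η²)` is strictly monotone increasing on `[-√s, √s]`,
and the radicand is strictly positive on this interval. -/
theorem future_margin_strictMonoOn
    (a η s : ℝ) (ha : 0 < a) (hη : 0 < η) (hs : η ^ 2 < a ^ 2 * s) :
    StrictMonoOn
      (fun m : ℝ => (a * m + η) / Real.sqrt (a ^ 2 * s + 2 * a * η * m + η ^ 2))
      (Set.Icc (-Real.sqrt s) (Real.sqrt s)) ∧
    ∀ m ∈ Set.Icc (-Real.sqrt s) (Real.sqrt s),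
      0 < a ^ 2 * s + 2 * a * η * m + η ^ 2 := by
  have hs0 : 0 < s := by
    by_contra h
    have h1 : a ^ 2 * s ≤ 0 := mul_nonpos_of_nonneg_of_nonpos (sq_nonneg a) (not_lt.mp h)
    nlinarith [sq_nonneg η]
  have hss : Real.sqrt s ^ 2 = s := Real.sq_sqrt hs0.le
  have ht : η < a * Real.sqrt s := by
    apply lt_of_pow_lt_pow_left₀ 2 (by positivity)
    rw [mul_pow, hss]
    exact hs
  have hpos : ∀ m ∈ Set.Icc (-Real.sqrt s) (Real.sqrt s),
      0 < a ^ 2 * s + 2 * a * η * m + η ^ 2 := by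
    intro m hm
    have h1 : 0 ≤ (2 * a * η) * (m + Real.sqrt s) :=
      mul_nonneg (by positivity) (by linarith [hm.1])
    have h2 : 0 < (a * Real.sqrt s - η) ^ 2 := pow_pos (by linarith) 2
    have h3 : (a * Real.sqrt s - η) ^ 2 = a ^ 2 * s - 2 * a * η * Real.sqrt s + η ^ 2 := by
      rw [sub_sq, mul_pow, hss]; ring
    nlinarith
  refine ⟨?_, hpos⟩
  intro x hx y hy hxy
  have hX := hpos x hx
  have hY := hpos y hy
  have hlt : a ^ 2 * s + 2 * a * η * x + η ^ 2 < a ^ 2 * s + 2 * a * η * y + η ^ 2 := by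
    have : (2 * a * η) * x < (2 * a * η) * y := mul_lt_mul_of_pos_left hxy (by positivity)
    linarith
  have hpq := Real.sqrt_lt_sqrt hX.le hlt
  have hp := Real.sqrt_pos.mpr hX
  have hq := Real.sqrt_pos.mpr hY
  have hp2 := Real.sq_sqrt hX.le
  have hq2 := Real.sq_sqrt hY.le
  show (a * x + η) / Real.sqrt _ < (a * y + η) / Real.sqrt _
  generalize Real.sqrt (a ^ 2 * s + 2 * a * η * x + η ^ 2) = p at *
  generalize Real.sqrt (a ^ 2 * s + 2 * a * η * y + η ^ 2) = q at *
  rw [div_lt_div_iff₀ hp hq]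
  have e1 : 2 * η * (a * x + η) = p ^ 2 - (a ^ 2 * s - η ^ 2) := by rw [hp2]; ring
  have e2 : 2 * η * (a * y + η) = q ^ 2 - (a ^ 2 * s - η ^ 2) := by rw [hq2]; ring
  have key : 0 < (q - p) * (p * q + (a ^ 2 * s - η ^ 2)) :=
    mul_pos (by linarith) (add_pos (mul_pos hp hq) (by linarith))
  have h2η : 0 < 2 * η := by linarith
  refine lt_of_mul_lt_mul_left ?_ h2η.le
  rw [← mul_assoc, ← mul_assoc, e1, e2]
  nlinarith
end

section
/- Fix a real inner product space E, a weight vector w ∈ E with w ≠ 0, a learning rate η > 0 and a regularization parameter λ ≥ 0 with a := 1 − ηλ > 0, and assume a·‖w‖ > η. Let (pᵢ, qᵢ) and (pⱼ, qⱼ) be labeled examples with ‖pᵢ‖ = ‖pⱼ‖ = 1 and qᵢ, qⱼ ∈ {−1, 1}, and let w⁽ⁱ⁾ := a·w + η·qᵢ·pᵢ and w⁽ʲ⁾ := a·w + η·qⱼ·pⱼ be the SGD updates of w. Then w⁽ⁱ⁾ ≠ 0 and w⁽ʲ⁾ ≠ 0, and if qᵢ·⟪w, pᵢ⟫ < qⱼ·⟪w,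 pⱼ⟫ then qᵢ·⟪w⁽ⁱ⁾/‖w⁽ⁱ⁾‖, pᵢ⟫ < qⱼ·⟪w⁽ʲ⁾/‖w⁽ʲ⁾‖, pⱼ⟫. In particular, for a finite nonempty family of such labeled examples, any index minimizing the current margin qᵢ·⟪w, pᵢ⟫ also minimizes the predicted future normalized margin qᵢ·⟪w⁽ⁱ⁾/‖w⁽ⁱ⁾‖, pᵢ⟫. -/
open scoped InnerProductSpace

/-- If `a‖w‖ > η`, then every SGD update `w⁽ⁱ⁾ = a•w + η·qᵢ•pᵢ` is nonzero,
a strictly smaller current margin yields a strictly smaller future normalized margin, and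
(in particular, for a finite nonempty family) a minimizer of the current margin is a
minimizer of the future normalized margin. -/
theorem min_margin_implies_min_future_margin
    {E : Type*} [NormedAddCommGroup E] [InnerProductSpace ℝ E]
    (w : E) (hw : w ≠ 0) (η lam : ℝ) (hη : 0 < η) (hlam : 0 ≤ lam)
    (a : ℝ) (ha : a = 1 - η * lam) (ha0 : 0 < a) (haw : η < a * ‖w‖)
    {ι : Type*} [Fintype ι] [Nonempty ι]
    (p : ι → E) (q : ι → ℝ)
    (hp : ∀ i, ‖p i‖ = 1) (hq : ∀ i, q i = 1 ∨ q i = -1)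
    (w' : ι → E) (hw' : ∀ i, w' i = a • w + (η * q i) • p i) :
    (∀ i, w' i ≠ 0) ∧
    (∀ i j : ι, q i * ⟪w, p i⟫_ℝ < q j * ⟪w, p j⟫_ℝ →
      q i * ⟪(‖w' i‖)⁻¹ • w' i, p i⟫_ℝ < q j * ⟪(‖w' j‖)⁻¹ • w' j, p j⟫_ℝ) ∧
    (∀ i : ι, (∀ j, q i * ⟪w, p i⟫_ℝ ≤ q j * ⟪w, p j⟫_ℝ) →
      ∀ j, q i * ⟪(‖w' i‖)⁻¹ • w' i, p i⟫_ℝ ≤ q j * ⟪(‖w' j‖)⁻¹ • w' j, p j⟫_ℝ) := by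
  have hqq : ∀ i, q i * q i = 1 := by
    intro i
    rcases hq i with h | h <;> rw [h] <;> norm_num
  have h0 : ∀ i, w' i ≠ 0 := by
    intro i hi
    rw [hw' i] at hi
    have h1 : a • w = -((η * q i) • p i) := eq_neg_of_add_eq_zero_left hi
    have h2 := congrArg norm h1
    have h3 : |q i| = 1 := by rcases hq i with h | h <;> rw [h] <;> norm_num
    rw [norm_neg, norm_smul, norm_smul, hp i, Real.norm_eq_abs, Real.norm_eq_abs, abs_mul,
      abs_of_pos ha0, abs_of_pos hη, h3] at h2
    linarith
  have hn : ∀ i, 0 < ‖w' i‖ := fun i => norm_pos_iff.mpr (h0 i)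
  have hsq : ∀ i, ‖w' i‖ ^ 2
      = (a * ‖w‖) ^ 2 + 2 * η * a * (q i * ⟪w, p i⟫_ℝ) + η ^ 2 := by
    intro i
    rw [hw' i, norm_add_sq_real, norm_smul, norm_smul, hp i, inner_smul_left, inner_smul_right,
      mul_pow, mul_pow, Real.norm_eq_abs, Real.norm_eq_abs, sq_abs, sq_abs]
    simp only [conj_trivial]
    linear_combination η ^ 2 * hqq i
  have hf : ∀ i, q i * ⟪(‖w' i‖)⁻¹ • w' i, p i⟫_ℝ
      = (‖w' i‖ - ((a * ‖w‖) ^ 2 - η ^ 2) * (‖w' i‖)⁻¹) / (2 * η) := by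
    intro i
    have h1 : q i * ⟪w' i, p i⟫_ℝ = a * (q i * ⟪w, p i⟫_ℝ) + η := by
      rw [hw' i, inner_add_left, inner_smul_left, inner_smul_left, real_inner_self_eq_norm_sq,
        hp i]
      simp only [conj_trivial]
      linear_combination η * hqq i
    have h2 := hsq i
    have h3 := (hn i).ne'
    rw [inner_smul_left]
    simp only [conj_trivial]
    rw [mul_left_comm, h1]
    field_simp
    linarith
  have hA : 0 < (a * ‖w‖) ^ 2 - η ^ 2 := by nlinarith
  have hlt : ∀ i j : ι, q i * ⟪w, p i⟫_ℝ < q j * ⟪w, p j⟫_ℝ →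
      q i * ⟪(‖w' i‖)⁻¹ • w' i, p i⟫_ℝ < q j * ⟪(‖w' j‖)⁻¹ • w' j, p j⟫_ℝ := by
    intro i j hij
    have h1 : ‖w' i‖ < ‖w' j‖ := by
      apply lt_of_pow_lt_pow_left₀ 2 (hn j).le
      rw [hsq i, hsq j]
      have := mul_lt_mul_of_pos_left hij (show 0 < 2 * η * a by positivity)
      linarith
    have h2 : (‖w' j‖)⁻¹ < (‖w' i‖)⁻¹ := inv_strictAnti₀ (hn i) h1
    have h3 := mul_lt_mul_of_pos_left h2 hA
    rw [hf i, hf j]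
    apply div_lt_div_of_pos_right _ (by positivity)
    linarith
  refine ⟨h0, hlt, ?_⟩
  intro i hi j
  rcases (hi j).lt_or_eq with h | h
  · exact (hlt i j h).le
  · have h1 : ‖w' i‖ = ‖w' j‖ := by
      apply (pow_left_inj₀ (hn i).le (hn j).le two_ne_zero).mp
      rw [hsq i, hsq j, h]
    rw [hf i, hf j, h1]
end

section
/- Fix a real inner product space E, a weight vector w ∈ E with w ≠ 0, a learning rate η > 0 and a regularization parameter λ ≥ 0 with a := 1 − ηλ > 0. Let (pᵢ, qᵢ) and (pⱼ, qⱼ) be labeled examples with ‖pᵢ‖ = ‖pⱼ‖ = 1 and qᵢ, qⱼ ∈ {−1, 1}, and let w⁽ⁱ⁾ := a·w + η·qᵢ·pᵢ and w⁽ʲ⁾ := a·w + η·qⱼ·pⱼ. If −η/a < qᵢ·⟪w, pᵢ⟫ < qⱼ·⟪w, pⱼ⟫, then w⁽ⁱ⁾ ≠ 0, w⁽ʲ⁾ ≠ 0, and the cosine similarity between the updated and current weight vectors satisfies ⟪w⁽ⁱ⁾, w⟫/(‖w⁽ⁱ⁾‖·‖w‖) < ⟪w⁽ʲ⁾, w⟫/(‖w⁽ʲ⁾‖·‖w‖).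 In particular, the example of minimum current margin (among examples whose margin exceeds −η/a) induces the SGD update of maximal angular model change from w. -/
open scoped InnerProductSpace

/-- Norm and inner product data of one update. -/
theorem sgd_update_aux
    {E : Type*} [NormedAddCommGroup E] [InnerProductSpace ℝ E]
    (w p v : E) (η a q : ℝ) (hp : ‖p‖ = 1) (hq : q = 1 ∨ q = -1)
    (hv : v = a • w + (η * q) • p) (h : 0 < a * (q * ⟪w, p⟫_ℝ) + η) :
    0 < ‖v‖ ∧ ⟪v, w⟫_ℝ = a * ‖w‖ ^ 2 + η * (q * ⟪w, p⟫_ℝ) ∧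
      ‖v‖ ^ 2 = a ^ 2 * ‖w‖ ^ 2 + 2 * a * η * (q * ⟪w, p⟫_ℝ) + η ^ 2 := by
  have hq2 : q * q = 1 := by rcases hq with rfl | rfl <;> norm_num
  have hpp : ⟪p, p⟫_ℝ = 1 := by rw [real_inner_self_eq_norm_sq, hp]; norm_num
  refine ⟨?_, ?_, ?_⟩
  · rw [norm_pos_iff]
    intro h0
    have h1 : q * ⟪v, p⟫_ℝ = a * (q * ⟪w, p⟫_ℝ) + η := by
      rw [hv, inner_add_left, real_inner_smul_left, real_inner_smul_left, hpp]
      linear_combination η * hq2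
    rw [h0, inner_zero_left] at h1
    linarith
  · rw [hv, inner_add_left, real_inner_smul_left, real_inner_smul_left,
      real_inner_self_eq_norm_sq, real_inner_comm]
    ring
  · rw [← real_inner_self_eq_norm_sq v, hv]
    simp only [inner_add_left, inner_add_right, real_inner_smul_left, real_inner_smul_right, hpp,
      real_inner_comm w p]
    rw [real_inner_self_eq_norm_sq w]
    linear_combination η ^ 2 * hq2

/-- Among examples whose current margin exceeds `-η/a`, a strictly smaller
current margin induces an SGD update with strictly smaller cosine similarity to the current
weight vector, i.e. a larger angular model change; moreover both updates are nonzero. -/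
theorem min_margin_implies_max_model_change
    {E : Type*} [NormedAddCommGroup E] [InnerProductSpace ℝ E]
    (w : E) (hw : w ≠ 0) (η lam : ℝ) (hη : 0 < η) (hlam : 0 ≤ lam)
    (a : ℝ) (ha : a = 1 - η * lam) (ha0 : 0 < a)
    (pi pj : E) (qi qj : ℝ)
    (hpi : ‖pi‖ = 1) (hpj : ‖pj‖ = 1)
    (hqi : qi = 1 ∨ qi = -1) (hqj : qj = 1 ∨ qj = -1)
    (wi wj : E)
    (hwi : wi = a • w + (η * qi) • pi) (hwj : wj = a • w + (η * qj) • pj)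
    (hlo : -η / a < qi * ⟪w, pi⟫_ℝ)
    (hij : qi * ⟪w, pi⟫_ℝ < qj * ⟪w, pj⟫_ℝ) :
    wi ≠ 0 ∧ wj ≠ 0 ∧
    ⟪wi, w⟫_ℝ / (‖wi‖ * ‖w‖) < ⟪wj, w⟫_ℝ / (‖wj‖ * ‖w‖) := by
  have hi : 0 < a * (qi * ⟪w, pi⟫_ℝ) + η := by
    rw [div_lt_iff₀ ha0] at hlo
    linarith
  have hj : 0 < a * (qj * ⟪w, pj⟫_ℝ) + η := by
    have := mul_lt_mul_of_pos_left hij ha0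
    linarith
  obtain ⟨hx, hNi, hDi⟩ := sgd_update_aux w pi wi η a qi hpi hqi hwi hi
  obtain ⟨hy, hNj, hDj⟩ := sgd_update_aux w pj wj η a qj hpj hqj hwj hj
  have hW : 0 < ‖w‖ := norm_pos_iff.mpr hw
  refine ⟨norm_pos_iff.mp hx, norm_pos_iff.mp hy, ?_⟩
  rw [hNi, hNj]
  generalize qi * ⟪w, pi⟫_ℝ = m at *
  generalize qj * ⟪w, pj⟫_ℝ = n at *
  generalize ‖wi‖ = x at *
  generalize ‖wj‖ = y at *
  generalize ‖w‖ = W at *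
  have haη : 0 < a * η := mul_pos ha0 hη
  have hxy : x < y := by
    apply lt_of_pow_lt_pow_left₀ 2 hy.le
    have := mul_lt_mul_of_pos_left hij haη
    linarith
  have hc : 0 < x * y - (a ^ 2 * W ^ 2 - η ^ 2) := by
    have h1 := mul_lt_mul_of_pos_left hxy hx
    have h2 := mul_pos hη hi
    nlinarith
  have hprod := mul_pos (sub_pos.mpr hxy) hc
  have key : (a * W ^ 2 + η * m) * y < (a * W ^ 2 + η * n) * x := by
    have e : 2 * a * ((a * W ^ 2 + η * n) * x - (a * W ^ 2 + η * m) * y)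
        = (y - x) * (x * y - (a ^ 2 * W ^ 2 - η ^ 2)) := by
      linear_combination y * hDi - x * hDj
    rw [← e] at hprod
    exact sub_pos.mp (pos_of_mul_pos_right hprod (by positivity))
  rw [div_lt_div_iff₀ (by positivity) (by positivity)]
  have := mul_lt_mul_of_pos_right key hW
  linarith
end

section
/- Fix a real inner product space E, natural numbers m ≥ 1 and t ≥ 2, a learning rate η := 1/(m·t), and a regularization parameter λ with 0 ≤ λ ≤ m·t; set a := 1 − ηλ (so 0 ≤ a ≤ 1). Let (p_k, q_k)_{k<m} and (p*_k, q*_k)_{k<m} be two sequences of labeled examples in E with ‖p_k‖ ≤ 1, ‖p*_k‖ ≤ 1, q_k, q*_k ∈ {−1, 1}, and suppose there exist real numbers θ ∈ [0, 1] and δ ≥ 0 such that ‖p_k − p*_k‖ ≤ δ for all k and q_k = q*_k for at least θ·m of the indices k < m. Define two SGD runs from the same initial vector w_t ∈ E by w_{k+1} = a·w_k + η·q_k·p_k and w*_{k+1} = a·w*_k + η·q*_k·p*_k with w_0 = w*_0 = w_t, and write w_{t+1} := w_m, w*_{t+1} := w*_m. Then ‖w_{t+1} − w*_{t+1}‖ ≤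 ln(1 + 1/(t−1))·(2·(1 − θ) + δ). -/
/-- Theorem 2 of the paper, fully hypothesized. With learning rate
`η = 1/(mt)`, `0 ≤ λ ≤ mt`, `a = 1 − ηλ`, true and predicted labeled examples with
feature discrepancy at most `δ` and label agreement on at least `θ·m` of the `m` steps,
the models obtained by `m` SGD updates from the same initial vector satisfy
`‖w_{t+1} − w*_{t+1}‖ ≤ ln(1 + 1/(t−1))·(2(1−θ) + δ)`. -/
theorem predicted_model_deviation_bound
    {E : Type*} [NormedAddCommGroup E] [InnerProductSpace ℝ E]
    (m t : ℕ) (hm : 1 ≤ m) (ht : 2 ≤ t)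
    (η : ℝ) (hη : η = 1 / ((m : ℝ) * t))
    (lam : ℝ) (hlam0 : 0 ≤ lam) (hlam1 : lam ≤ (m : ℝ) * t)
    (a : ℝ) (ha : a = 1 - η * lam)
    (p ps : ℕ → E) (q qs : ℕ → ℝ)
    (hp : ∀ k < m, ‖p k‖ ≤ 1) (hps : ∀ k < m, ‖ps k‖ ≤ 1)
    (hq : ∀ k < m, q k = 1 ∨ q k = -1) (hqs : ∀ k < m, qs k = 1 ∨ qs k = -1)
    (θ δ : ℝ) (hθ : θ ∈ Set.Icc (0 : ℝ) 1) (hδ : 0 ≤ δ)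
    (hdiff : ∀ k < m, ‖p k - ps k‖ ≤ δ)
    (hagree : θ * m ≤ ((Finset.range m).filter (fun k => q k = qs k)).card)
    (wt : E) (w ws : ℕ → E) (h0 : w 0 = wt) (h0s : ws 0 = wt)
    (hw : ∀ k < m, w (k + 1) = a • w k + (η * q k) • p k)
    (hws : ∀ k < m, ws (k + 1) = a • ws k + (η * qs k) • ps k) :
    ‖w m - ws m‖ ≤ Real.log (1 + 1 / ((t : ℝ) - 1)) * (2 * (1 - θ) + δ) := by
  have hm' : (0:ℝ) < m := by exact_mod_cast hm
  have ht' : (2:ℝ) ≤ t := by exact_mod_cast ht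
  have hmt : (0:ℝ) < (m:ℝ) * t := by positivity
  have hη0 : 0 < η := by rw [hη]; positivity
  have hηl : η * lam ≤ 1 := by
    rw [hη, one_div, inv_mul_le_iff₀ hmt]; linarith
  have ha0 : 0 ≤ a := by linarith
  have ha1 : a ≤ 1 := by
    have := mul_nonneg hη0.le hlam0
    linarith
  have step : ∀ k < m, ‖q k • p k - qs k • ps k‖ ≤ (if q k = qs k then 0 else 2) + δ := by
    intro k hk
    have habs : |q k| = 1 := by rcases hq k hk with h | h <;> simp [h]
    have habss : |qs k| = 1 := by rcases hqs k hk with h | h <;> simp [h]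
    split_ifs with h
    · rw [← h, ← smul_sub, norm_smul, Real.norm_eq_abs, habs]
      linarith [hdiff k hk]
    · have h1 := norm_sub_le (q k • p k) (qs k • ps k)
      rw [norm_smul, norm_smul, Real.norm_eq_abs, Real.norm_eq_abs, habs, habss] at h1
      linarith [hp k hk, hps k hk]
  have main : ∀ n ≤ m, ‖w n - ws n‖ ≤
      η * ∑ k ∈ Finset.range n, ((if q k = qs k then (0:ℝ) else 2) + δ) := by
    intro n
    induction n with
    | zero => intro _; simp [h0, h0s]
    | succ n ih =>
      intro hn
      have ih' := ih (by omega)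
      have hs := step n (by omega)
      have e : w (n+1) - ws (n+1) = a • (w n - ws n) + η • (q n • p n - qs n • ps n) := by
        rw [hw n (by omega), hws n (by omega)]
        module
      rw [e, Finset.sum_range_succ, mul_add]
      refine (norm_add_le _ _).trans (add_le_add ?_ ?_)
      · rw [norm_smul, Real.norm_eq_abs, abs_of_nonneg ha0]
        exact (mul_le_of_le_one_left (norm_nonneg _) ha1).trans ih'
      · rw [norm_smul, Real.norm_eq_abs, abs_of_pos hη0]
        exact mul_le_mul_of_nonneg_left hs hη0.le
  have hsum : ∑ k ∈ Finset.range m, ((if q k = qs k then (0:ℝ) else 2) + δ)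
      ≤ m * (2 * (1 - θ) + δ) := by
    have e : ∀ k ∈ Finset.range m, ((if q k = qs k then (0:ℝ) else 2) + δ)
        = (2 + δ) - 2 * (if q k = qs k then (1:ℝ) else 0) := by
      intro k _
      split_ifs <;> ring
    rw [Finset.sum_congr rfl e, Finset.sum_sub_distrib, ← Finset.mul_sum, Finset.sum_boole]
    simp only [Finset.sum_const, Finset.card_range, nsmul_eq_mul]
    linarith
  have hlog : 1 / (t:ℝ) ≤ Real.log (1 + 1 / ((t : ℝ) - 1)) := by
    have h1 : (0:ℝ) < t - 1 := by linarith
    have h2 : (0:ℝ) < 1 + 1 / ((t : ℝ) - 1) := by positivity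
    have h3 := Real.one_sub_inv_le_log_of_pos h2
    have h4 : 1 - (1 + 1 / ((t : ℝ) - 1))⁻¹ = 1 / (t:ℝ) := by
      have h5 : 1 + 1 / ((t : ℝ) - 1) = t / (t - 1) := by
        field_simp
        ring
      rw [h5, inv_div]
      field_simp
      ring
    linarith
  have hnn : 0 ≤ 2 * (1 - θ) + δ := by linarith [hθ.2]
  calc ‖w m - ws m‖ ≤ η * (m * (2 * (1 - θ) + δ)) :=
        (main m le_rfl).trans (mul_le_mul_of_nonneg_left hsum hη0.le)
    _ = 1 / (t:ℝ) * (2 * (1 - θ) + δ) := by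
        rw [hη]
        field_simp
    _ ≤ _ := mul_le_mul_of_nonneg_right hlog hnn
end
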